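/- Let A be a cBCK-algebra. The spectrum X(A) is Hausdorff if and only if σ(a) is clopen in X(A) for every a ∈ A. -/

import Mathlib

/-!
If every `σ(a)` is clopen, two distinct primes are separated by `σ(a)` and its complement, where
`a` lies in exactly one of them.

For the converse, the Hausdorff property forces inclusions between primes to be equalities: every
open set containing `Q` contains all primes `P ⊆ Q`. To see that `σ(a)` is closed, take a prime `Q`
with `a ∈ Q`. If some `b ∉ Q` satisfies `a ∧ b = 0`, then `σ(b)` is a neighbourhood of `Q` disjoint
from `σ(a)`. Otherwise `F = {a ∧ b : b ∉ Q}` is a down-directed set avoiding `0`, and an ideal `P`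
maximal among those disjoint from `F` is a prime contained in `Q` with `a ∉ P`, contradicting
`P = Q`. No compactness of `σ(a)` is needed.

Primality of `P` (`exists_prime_disjoint`) rests on the fact that, for an ideal `I`, the residual
`{z : z ∧ x ∈ I}` is again an ideal (`isIdeal_residual`). This yields the distributivity
statement `(P ∪ {x}] ∩ (P ∪ {y}] ⊆ P` whenever `x ∧ y ∈ P`
(`mem_of_mem_gen_of_mem_gen`), without an explicit description of generated ideals.
-/


universe u v

/-- A commutative BCK-algebra structure on a type `A`. -/
structure CBCK (A : Type u) where
  op : A → A → A
  zero : A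
  op_op_comm : ∀ x y z : A, op (op x y) z = op (op x z) y
  op_comm : ∀ x y : A, op x (op x y) = op y (op y x)
  op_self : ∀ x : A, op x x = zero
  op_zero : ∀ x : A, op x zero = x

namespace CBCK

variable {A : Type u}

/-- The meet `x ∧ y := y·(y·x)`. -/
def meet (C : CBCK A) (x y : A) : A := C.op y (C.op y x)

/-- A subset `I` is an ideal: `0 ∈ I` and `x·y ∈ I`, `y ∈ I` imply `x ∈ I`. -/
def IsIdeal (C : CBCK A) (I : Set A) : Prop :=
  C.zero ∈ I ∧ ∀ x y : A, C.op x y ∈ I → y ∈ I → x ∈ I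

/-- A prime ideal: a proper ideal such that `x ∧ y ∈ P` implies `x ∈ P` or `y ∈ P`. -/
def IsPrimeIdeal (C : CBCK A) (P : Set A) : Prop :=
  C.IsIdeal P ∧ P ≠ Set.univ ∧ ∀ x y : A, C.meet x y ∈ P → x ∈ P ∨ y ∈ P

/-- The ideal generated by a subset `S`: the smallest ideal containing `S`. -/
def idealGen (C : CBCK A) (S : Set A) : Set A :=
  ⋂₀ {I : Set A | C.IsIdeal I ∧ S ⊆ I}

/-- The spectrum: the set of prime ideals. -/
def Spec (C : CBCK A) : Type u := {P : Set A // C.IsPrimeIdeal P}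

/-- `σ(I) = {P ∈ X(A) : I ⊄ P}`. -/
def sigmaSet (C : CBCK A) (I : Set A) : Set C.Spec := {P : C.Spec | ¬ I ⊆ P.1}

/-- `σ(a) = σ((a])`. -/
def sigmaPt (C : CBCK A) (a : A) : Set C.Spec := C.sigmaSet (C.idealGen {a})

/-- Iterated subtraction: `x·y⁰ = x`, `x·yⁿ⁺¹ = (x·yⁿ)·y`. -/
def opPow (C : CBCK A) (x y : A) : ℕ → A
  | 0 => x
  | n + 1 => C.op (C.opPow x y n) y

/-- A subset `B` is a subalgebra: contains `0` and is closed under the operation. -/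
def IsSubalg (C : CBCK A) (B : Set A) : Prop :=
  C.zero ∈ B ∧ ∀ x ∈ B, ∀ y ∈ B, C.op x y ∈ B

/-- The subalgebra generated by a subset. -/
def subalgGen (C : CBCK A) (S : Set A) : Set A :=
  ⋂₀ {B : Set A | C.IsSubalg B ∧ S ⊆ B}

/-- `I` is an ideal of the subalgebra `B`. -/
def IsIdealIn (C : CBCK A) (B I : Set A) : Prop :=
  I ⊆ B ∧ C.zero ∈ I ∧ ∀ x ∈ B, ∀ y ∈ B, C.op x y ∈ I → y ∈ I → x ∈ I

/-- `P` is a prime ideal of the subalgebra `B`. -/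
def IsPrimeIdealIn (C : CBCK A) (B P : Set A) : Prop :=
  C.IsIdealIn B P ∧ P ≠ B ∧ ∀ x ∈ B, ∀ y ∈ B, C.meet x y ∈ P → x ∈ P ∨ y ∈ P

/-- The spectrum of a subalgebra `B`: its set of prime ideals. -/
def SpecIn (C : CBCK A) (B : Set A) : Type u := {P : Set A // C.IsPrimeIdealIn B P}

/-- The annihilator `S* = {a : a ∧ s = 0 for all s ∈ S}`. -/
def ann (C : CBCK A) (S : Set A) : Set A := {a : A | ∀ s ∈ S, C.meet a s = C.zero}

/-- The annihilator of `S` computed inside the subalgebra `B`. -/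
def annIn (C : CBCK A) (B S : Set A) : Set A :=
  {a : A | a ∈ B ∧ ∀ s ∈ S, C.meet a s = C.zero}

/-- `A` is involutory: every ideal `I` satisfies `I = I**`. -/
def Involutory (C : CBCK A) : Prop := ∀ I : Set A, C.IsIdeal I → C.ann (C.ann I) = I

/-- The subalgebra `B` is involutory. -/
def InvolutoryIn (C : CBCK A) (B : Set A) : Prop :=
  ∀ I : Set A, C.IsIdealIn B I → C.annIn B (C.annIn B I) = I

/-- The data of `A` being the cBCK-union of the family of subalgebras `Aset`:
the subalgebras cover `A`, pairwise intersect in `{0}`, and the operation between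
distinct members is `x·y = x`. -/
def IsUnionFamily (C : CBCK A) {Λ : Type v} (Aset : Λ → Set A) : Prop :=
  (∀ x : A, ∃ l : Λ, x ∈ Aset l) ∧
  (∀ l : Λ, C.IsSubalg (Aset l)) ∧
  (∀ l m : Λ, l ≠ m → Aset l ∩ Aset m = {C.zero}) ∧
  (∀ l m : Λ, l ≠ m → ∀ x ∈ Aset l, ∀ y ∈ Aset m, C.op x y = x)

end CBCK

namespace CBCK

variable {A : Type u} (C : CBCK A)

lemma zero_op (y : A) : C.op C.zero y = C.zero := by
  have h : C.op C.zero (C.op C.zero y) = C.zero := by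
    rw [C.op_comm, C.op_zero, C.op_self]
  calc C.op C.zero y = C.op (C.op C.zero (C.op C.zero y)) y := by rw [h]
    _ = C.op (C.op C.zero y) (C.op C.zero y) := C.op_op_comm _ _ _
    _ = C.zero := C.op_self _

lemma op_le (x y : A) : C.op (C.op x y) x = C.zero := by
  rw [C.op_op_comm, C.op_self, C.zero_op]

/-- The axiom by which BCK-algebras are usually presented; here it follows from commutativity. -/
lemma bck (x y z : A) : C.op (C.op (C.op x y) (C.op x z)) (C.op z y) = C.zero := by
  rw [C.op_op_comm x y, C.op_comm x z, C.op_op_comm z _ y, C.op_le]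

lemma le_trans' {x y z : A} (h : C.op x y = C.zero) (h' : C.op y z = C.zero) :
    C.op x z = C.zero := by
  have := C.bck x z y
  rwa [h, h', C.op_zero, C.op_zero] at this

lemma op_mono_left {x z : A} (y : A) (h : C.op x z = C.zero) :
    C.op (C.op x y) (C.op z y) = C.zero := by
  have := C.bck x y z
  rwa [h, C.op_zero] at this

lemma op_anti_right (x : A) {y z : A} (h : C.op y z = C.zero) :
    C.op (C.op x z) (C.op x y) = C.zero := by
  have := C.bck x z y
  rwa [h, C.op_zero] at this

lemma meet_comm' (x y : A) : C.meet x y = C.meet y x := C.op_comm _ _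

lemma meet_le_right (x y : A) : C.op (C.meet x y) y = C.zero := C.op_le _ _

lemma meet_le_left (x y : A) : C.op (C.meet x y) x = C.zero := by
  rw [C.meet_comm']; exact C.meet_le_right _ _

lemma le_meet {w x y : A} (hx : C.op w x = C.zero) (hy : C.op w y = C.zero) :
    C.op w (C.meet x y) = C.zero := by
  have h : w = C.op y (C.op y w) := by rw [C.op_comm, hy, C.op_zero]
  have h2 := C.op_anti_right y (C.op_anti_right y hx)
  rw [← h] at h2
  exact h2

lemma op_meet_self (t s : A) : C.op t (C.meet s t) = C.op t s := by
  unfold meet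
  rw [C.op_comm t (C.op t s), C.op_le, C.op_zero]

/-- Subtraction distributes over the meet up to inequality; this is what makes residuals of
ideals into ideals. -/
lemma meet_op_meet_le (z w x : A) :
    C.op (C.op (C.meet z x) (C.meet w x)) (C.meet (C.op z w) x) = C.zero := by
  apply C.le_meet
  · -- Below `x`, subtracting `w ∧ x` amounts to subtracting `w`.
    have h : C.op (C.op (C.meet z x) (C.meet w x)) (C.op (C.meet z x) w) = C.zero := by
      rw [← C.op_meet_self _ (C.meet w x), ← C.op_meet_self _ w]
      apply C.op_anti_right
      refine C.le_meet (C.le_meet (C.meet_le_left _ _) ?_) (C.meet_le_right _ _)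
      exact C.le_trans' (C.meet_le_right _ _) (C.meet_le_right _ _)
    exact C.le_trans' h (C.op_mono_left _ (C.meet_le_left _ _))
  · exact C.le_trans' (C.op_le _ _) (C.meet_le_right _ _)

variable {C}

lemma IsIdeal.down {I : Set A} (hI : C.IsIdeal I) {x y : A} (h : C.op x y = C.zero)
    (hy : y ∈ I) : x ∈ I :=
  hI.2 x y (h ▸ hI.1) hy

lemma isIdeal_residual {I : Set A} (hI : C.IsIdeal I) (x : A) :
    C.IsIdeal {z | C.meet z x ∈ I} := by
  refine ⟨hI.down (C.meet_le_left _ _) hI.1, fun z w h hw => ?_⟩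
  exact hI.2 _ _ (hI.down (C.meet_op_meet_le z w x) h) hw

lemma isIdeal_idealGen (S : Set A) : C.IsIdeal (C.idealGen S) :=
  ⟨fun _ hI => hI.1.1, fun x y h hy I hI => hI.1.2 x y (h I hI) (hy I hI)⟩

lemma subset_idealGen (S : Set A) : S ⊆ C.idealGen S := fun _ hx _ hI => hI.2 hx

lemma idealGen_subset {S I : Set A} (hI : C.IsIdeal I) (h : S ⊆ I) : C.idealGen S ⊆ I :=
  fun _ hx => hx I ⟨hI, h⟩

/-- A distributivity property of the ideal lattice: if `x ∧ y ∈ P`, then the ideals generated by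
`P` with `x` and by `P` with `y` meet inside `P`. -/
lemma mem_of_mem_gen_of_mem_gen {P : Set A} (hP : C.IsIdeal P) {x y u : A}
    (hxy : C.meet x y ∈ P) (hx : u ∈ C.idealGen (insert x P))
    (hy : u ∈ C.idealGen (insert y P)) : u ∈ P := by
  have h1 : C.meet u x ∈ P := by
    refine idealGen_subset (isIdeal_residual hP x) (Set.insert_subset ?_ fun p hp => ?_) hy
    · rwa [Set.mem_ofPred_eq, C.meet_comm']
    · exact hP.down (C.meet_le_left _ _) hp
  have h2 : C.meet u u ∈ P := by
    refine idealGen_subset (isIdeal_residual hP u) (Set.insert_subset ?_ fun p hp => ?_) hx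
    · rwa [Set.mem_ofPred_eq, C.meet_comm']
    · exact hP.down (C.meet_le_left _ _) hp
  exact hP.down (C.le_meet (C.op_self u) (C.op_self u)) h2

/-- Prime ideal theorem: a nonempty down-directed set not containing `0` is avoided by some prime
ideal. -/
lemma exists_prime_disjoint {F : Set A} (hne : F.Nonempty) (h0 : C.zero ∉ F)
    (hdir : ∀ f ∈ F, ∀ g ∈ F, ∃ u ∈ F, C.op u f = C.zero ∧ C.op u g = C.zero) :
    ∃ P, C.IsPrimeIdeal P ∧ Disjoint P F := by
  obtain ⟨P, hPm⟩ := zorn_subset {I | C.IsIdeal I ∧ Disjoint I F} (by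
    intro c hc hchain
    rcases c.eq_empty_or_nonempty with rfl | ⟨J, hJ⟩
    · refine ⟨{C.zero}, ⟨⟨rfl, ?_⟩, Set.disjoint_singleton_left.2 h0⟩, by simp⟩
      rintro x y hxy rfl
      rwa [C.op_zero] at hxy
    · refine ⟨⋃₀ c, ⟨⟨⟨J, hJ, (hc hJ).1.1⟩, ?_⟩, ?_⟩, fun s hs => Set.subset_sUnion_of_mem hs⟩
      · rintro x y ⟨I, hI, hxy⟩ ⟨K, hK, hy⟩
        rcases hchain.total hI hK with h | h
        · exact ⟨K, hK, (hc hK).1.2 x y (h hxy) hy⟩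
        · exact ⟨I, hI, (hc hI).1.2 x y hxy (h hy)⟩
      · exact Set.disjoint_sUnion_left.2 fun I hI => (hc hI).2)
  obtain ⟨hP, hd⟩ := hPm.prop
  have hhit : ∀ x ∉ P, ∃ f ∈ F, f ∈ C.idealGen (insert x P) := by
    intro x hx
    by_contra! h
    refine hx (hPm.le_of_ge ⟨isIdeal_idealGen (insert x P), ?_⟩ ?_
      (subset_idealGen _ (Set.mem_insert x P)))
    · exact Set.disjoint_right.2 h
    · exact (Set.subset_insert x P).trans (subset_idealGen _)
  refine ⟨P, ⟨hP, ?_, fun x y hxy => ?_⟩, hd⟩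
  · rintro rfl
    obtain ⟨f, hf⟩ := hne
    exact Set.disjoint_left.1 hd (Set.mem_univ f) hf
  · by_contra! h
    obtain ⟨f, hf, hfx⟩ := hhit x h.1
    obtain ⟨g, hg, hgy⟩ := hhit y h.2
    obtain ⟨u, hu, huf, hug⟩ := hdir f hf g hg
    exact Set.disjoint_left.1 hd (mem_of_mem_gen_of_mem_gen hP hxy
      ((isIdeal_idealGen _).down huf hfx) ((isIdeal_idealGen _).down hug hgy)) hu

lemma mem_sigmaPt {a : A} {P : C.Spec} : P ∈ C.sigmaPt a ↔ a ∉ P.1 :=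
  not_congr ⟨fun h => h (subset_idealGen _ rfl),
    fun h => idealGen_subset P.2.1 (Set.singleton_subset_iff.2 h)⟩

/-- If `a ∧ b ≠ 0` for all `b ∉ Q`, then some prime contained in `Q` omits `a`. -/
lemma exists_prime_subset_not_mem (Q : C.Spec) (a : A)
    (h : ∀ b ∉ Q.1, C.meet a b ≠ C.zero) : ∃ P : C.Spec, P.1 ⊆ Q.1 ∧ a ∉ P.1 := by
  obtain ⟨b₀, hb₀⟩ := (Set.ne_univ_iff_exists_notMem _).1 Q.2.2.1
  obtain ⟨P, hP, hd⟩ := exists_prime_disjoint (C := C) (F := C.meet a '' Q.1ᶜ)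
    ⟨_, b₀, hb₀, rfl⟩ (by rintro ⟨b, hb, hb'⟩; exact h b hb hb') (by
      rintro _ ⟨b, hb, rfl⟩ _ ⟨c, hc, rfl⟩
      refine ⟨_, ⟨C.meet b c, fun hbc => (Q.2.2.2 b c hbc).elim hb hc, rfl⟩, ?_, ?_⟩
      · exact C.le_meet (C.meet_le_left _ _)
          (C.le_trans' (C.meet_le_right _ _) (C.meet_le_left _ _))
      · exact C.le_meet (C.meet_le_left _ _)
          (C.le_trans' (C.meet_le_right _ _) (C.meet_le_right _ _)))
  refine ⟨⟨P, hP⟩, fun p hp => ?_, fun ha => ?_⟩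
  · by_contra hpQ
    exact Set.disjoint_left.1 hd (hP.1.down (C.meet_le_right a p) hp) ⟨p, hpQ, rfl⟩
  · exact Set.disjoint_left.1 hd (hP.1.down (C.meet_le_left a b₀) ha) ⟨b₀, hb₀, rfl⟩

end CBCK

/-- The spectrum of a cBCK-algebra is Hausdorff iff `σ(a)` is
clopen for every `a`. -/
theorem spec_hausdorff_iff_sigmaPt_clopen {A : Type u} (C : CBCK A)
    [ts : TopologicalSpace C.Spec]
    (hT : ∀ s : Set C.Spec, IsOpen s ↔ ∃ I : Set A, C.IsIdeal I ∧ s = C.sigmaSet I) :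
    T2Space C.Spec ↔ ∀ a : A, IsClopen (C.sigmaPt a) := by
  have hopen : ∀ a, IsOpen (C.sigmaPt a) := fun a =>
    (hT _).2 ⟨_, CBCK.isIdeal_idealGen {a}, rfl⟩
  constructor
  · intro _ a
    refine ⟨⟨isOpen_iff_forall_mem_open.2 fun Q hQ => ?_⟩, hopen a⟩
    have haQ : a ∈ Q.1 := not_not.1 fun h => hQ (CBCK.mem_sigmaPt.2 h)
    by_cases h : ∃ b ∉ Q.1, C.meet a b = C.zero
    · obtain ⟨b, hb, hab⟩ := h
      refine ⟨C.sigmaPt b, fun P hPb hPa => ?_, hopen b, CBCK.mem_sigmaPt.2 hb⟩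
      exact (P.2.2.2 a b (hab ▸ P.2.1.1)).elim (CBCK.mem_sigmaPt.1 hPa) (CBCK.mem_sigmaPt.1 hPb)
    · push Not at h
      obtain ⟨P, hPQ, haP⟩ := CBCK.exists_prime_subset_not_mem Q a h
      have hne : P ≠ Q := by rintro rfl; exact haP haQ
      obtain ⟨U, V, -, hV, hPU, hQV, hUV⟩ := t2_separation hne
      obtain ⟨I, -, rfl⟩ := (hT V).1 hV
      -- `P ⊆ Q`, so every open set containing `Q` contains `P`.
      exact (Set.disjoint_left.1 hUV hPU fun hIP => hQV (hIP.trans hPQ)).elim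
  · intro h
    have key : ∀ P Q : C.Spec, ¬ P.1 ⊆ Q.1 →
        ∃ U V : Set C.Spec, IsOpen U ∧ IsOpen V ∧ P ∈ U ∧ Q ∈ V ∧ Disjoint U V := by
      intro P Q hPQ
      obtain ⟨a, haP, haQ⟩ := Set.not_subset.1 hPQ
      exact ⟨(C.sigmaPt a)ᶜ, C.sigmaPt a, (h a).compl.isOpen, (h a).isOpen,
        fun hP => CBCK.mem_sigmaPt.1 hP haP, CBCK.mem_sigmaPt.2 haQ, disjoint_compl_left⟩
    refine ⟨fun P Q hne => ?_⟩
    by_cases hPQ : P.1 ⊆ Q.1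
    · obtain ⟨U, V, hU, hV, hQ, hP, hd⟩ :=
        key Q P fun hQP => hne (Subtype.ext (hPQ.antisymm hQP))
      exact ⟨V, U, hV, hU, hP, hQ, hd.symm⟩
    · exact key P Q hPQ
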